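/- Let L and S be positive integers with S ≤ L, let γ ∈ (0,1) be the positive root of Lγ + Sγ² = 1, let (ξ^j)_{j≥1} be the (L,S)-sequence of points, and let (t_n) be given by t₀ = 1, t₁ = L+S, t_n = L t_{n−1} + S t_{n−2}. Then there exist constants c₁, c₁′ > 0 such that for every integer n ≥ 1 one has c₁′ ≤ t_n · D(ξ¹, ξ², …, ξ^{t_n}) ≤ c₁; that is, the first t_n points of the (L,S)-sequence (which are the left endpoints of the intervals of the n-th (L,S)-partition ρⁿ_{L,S}) form a point set whose normalized discrepancy is bounded above and below by positive constants. -/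

import Mathlib

open Finset Real

noncomputable section

/-- The `k`-th digit of `n` in base `b`. -/
def lsDigit (b n k : ℕ) : ℕ := n / b ^ k % b

/-- Membership in the set `N_{L,S}`: for every `k`, the pair of consecutive digits
`(a_k(n), a_{k+1}(n))` in base `L+S` does not lie in
`{L,…,L+S−1} × {1,…,L+S−1}`. -/
def memNLS (L S n : ℕ) : Prop :=
  ∀ k : ℕ, ¬ (L ≤ lsDigit (L + S) n k ∧ lsDigit (L + S) n k ≤ L + S - 1 ∧
      1 ≤ lsDigit (L + S) n (k + 1) ∧ lsDigit (L + S) n (k + 1) ≤ L + S - 1)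

/-- The modified digit `ã`: `ã = a` if `a ≤ L−1`, and `ã = L + γ(a−L)` if `L ≤ a`. -/
def lsTilde (L : ℕ) (γ : ℝ) (a : ℕ) : ℝ :=
  if a < L then (a : ℝ) else (L : ℝ) + γ * ((a : ℝ) - (L : ℝ))

/-- The radical-inverse-type function `φ_{L,S}(n) = Σ_{k=0}^{M} ã_k(n) γ^{k+1}`,
with `M = ⌊log_{L+S} n⌋`. -/
def lsPhi (L S : ℕ) (γ : ℝ) (n : ℕ) : ℝ :=
  ∑ k ∈ Finset.range (Nat.log (L + S) n + 1),
    lsTilde L γ (lsDigit (L + S) n k) * γ ^ (k + 1)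

/-- The `(L,S)`-sequence of points: `ξ^j = φ_{L,S}(n_j)` where `n_1 < n_2 < ⋯`
is the increasing enumeration of `N_{L,S}` (so `n_j = Nat.nth (memNLS L S) (j-1)`). -/
def lsSeq (L S : ℕ) (γ : ℝ) (j : ℕ) : ℝ :=
  lsPhi L S γ (Nat.nth (memNLS L S) (j - 1))

/-- One-dimensional discrepancy of the first `N` terms `x 1, …, x N` of a sequence:
`sup_{0 ≤ a < b ≤ 1} |(1/N) Σ_{j=1}^N χ_{[a,b)}(x j) − (b−a)|`. -/
def discrep (x : ℕ → ℝ) (N : ℕ) : ℝ :=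
  ⨆ p : {p : ℝ × ℝ // 0 ≤ p.1 ∧ p.1 < p.2 ∧ p.2 ≤ 1},
    |(∑ j ∈ Finset.Icc 1 N,
        Set.indicator (Set.Ico p.1.1 p.1.2) (fun _ => (1 : ℝ)) (x j)) / N
      - (p.1.2 - p.1.1)|

/-- Two-dimensional (star) discrepancy of the first `N` terms of a sequence of points
in the unit square:
`sup_{0 < a ≤ 1, 0 < b ≤ 1} |(1/N) Σ_{j=1}^N χ_{[0,a)×[0,b)}(x j) − ab|`. -/
def discrep2 (x : ℕ → ℝ × ℝ) (N : ℕ) : ℝ :=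
  ⨆ p : {p : ℝ × ℝ // 0 < p.1 ∧ p.1 ≤ 1 ∧ 0 < p.2 ∧ p.2 ≤ 1},
    |(∑ j ∈ Finset.Icc 1 N,
        Set.indicator (Set.Ico (0 : ℝ) p.1.1) (fun _ => (1 : ℝ)) (x j).1 *
        Set.indicator (Set.Ico (0 : ℝ) p.1.2) (fun _ => (1 : ℝ)) (x j).2) / N
      - p.1.1 * p.1.2|

/-! The points `φ(m)`, `m ∈ N_{L,S}`, `m < (L+S)^n`, form a self-similar set: at level `n + 2` it
consists of `L` copies of level `n + 1` scaled by `γ` and placed side by side on `[0, Lγ)`,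
followed by `S` copies of level `n` scaled by `γ²` on `[Lγ, 1)`. Uniform measure on `[0, 1)`
splits in the same way. Any `x` cuts through at most one of these copies, so the local discrepancy
at level `n + 2` is bounded by those at the previous two levels plus multiples of the errors
`t_{n+1} - γ t_{n+2}` and `t_n - γ² t_{n+2}` made in the number of points per copy. The recursion
for `t` has eigenvalues `γ⁻¹` and `-Sγ`; the former cancels in these errors, which are therefore
`O((Sγ)^n)`. This is summable, because `S ≤ L` forces `Sγ < 1`.

The lower bound holds for any point set: test short intervals starting at one of its points. -/

section Discrepancy

variable {x : ℕ → ℝ} {N : ℕ}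

/-- The deviation `|#{j ≤ N : x j ∈ [a, b)} / N - (b - a)|` whose supremum over all intervals
`[a, b) ⊆ [0, 1)` is `discrep x N`. -/
def intervalDeviation (x : ℕ → ℝ) (N : ℕ) (a b : ℝ) : ℝ :=
  |(∑ j ∈ Icc 1 N, Set.indicator (Set.Ico a b) (fun _ ↦ (1 : ℝ)) (x j)) / N - (b - a)|

theorem intervalDeviation_le_one {a b : ℝ} (ha : 0 ≤ a) (hab : a ≤ b) (hb : b ≤ 1) :
    intervalDeviation x N a b ≤ 1 := by
  set c := ∑ j ∈ Icc 1 N, Set.indicator (Set.Ico a b) (fun _ ↦ (1 : ℝ)) (x j) with hc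
  have hc0 : 0 ≤ c := sum_nonneg fun j _ ↦ Set.indicator_nonneg (fun _ _ ↦ zero_le_one) _
  have hcN : c ≤ N := by
    simpa using sum_le_card_nsmul (Icc 1 N) _ 1 fun j _ ↦
      Set.indicator_le_self' (f := fun _ ↦ (1 : ℝ)) (fun _ _ ↦ zero_le_one) (x j)
  rw [intervalDeviation, ← hc, abs_le]
  constructor <;> linarith [div_nonneg hc0 N.cast_nonneg, div_le_one_of_le₀ hcN N.cast_nonneg]

theorem intervalDeviation_le_discrep {a b : ℝ} (ha : 0 ≤ a) (hab : a < b) (hb : b ≤ 1) :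
    intervalDeviation x N a b ≤ discrep x N := by
  refine le_ciSup (f := fun p : {p : ℝ × ℝ // 0 ≤ p.1 ∧ p.1 < p.2 ∧ p.2 ≤ 1} ↦
    intervalDeviation x N p.1.1 p.1.2) ⟨1, ?_⟩ ⟨(a, b), ha, hab, hb⟩
  rintro _ ⟨⟨p, hp0, hp, hp1⟩, rfl⟩
  exact intervalDeviation_le_one hp0 hp.le hp1

theorem discrep_le {C : ℝ}
    (h : ∀ a b, 0 ≤ a → a < b → b ≤ 1 → intervalDeviation x N a b ≤ C) : discrep x N ≤ C :=
  have : Nonempty {p : ℝ × ℝ // 0 ≤ p.1 ∧ p.1 < p.2 ∧ p.2 ≤ 1} :=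
    ⟨⟨(0, 1), le_rfl, one_pos, le_rfl⟩⟩
  ciSup_le fun p ↦ h p.1.1 p.1.2 p.2.1 p.2.2.1 p.2.2.2

theorem inv_le_discrep {j : ℕ} (hj : j ∈ Icc 1 N) (hx : x j ∈ Set.Ico 0 1) :
    (N : ℝ)⁻¹ ≤ discrep x N := by
  refine le_of_forall_pos_le_add fun ε hε ↦ ?_
  set b := min (x j + ε) 1
  have hb : x j < b := lt_min (by linarith) hx.2
  have hone : 1 ≤ ∑ i ∈ Icc 1 N, Set.indicator (Set.Ico (x j) b) (fun _ ↦ (1 : ℝ)) (x i) := by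
    simpa [hb] using single_le_sum (f := fun i ↦ Set.indicator (Set.Ico (x j) b) _ (x i))
      (fun i _ ↦ Set.indicator_nonneg (fun _ _ ↦ zero_le_one' ℝ) _) hj
  calc (N : ℝ)⁻¹
      ≤ (∑ i ∈ Icc 1 N, Set.indicator (Set.Ico (x j) b) (fun _ ↦ (1 : ℝ)) (x i)) / N := by
        rw [inv_eq_one_div]
        gcongr
    _ ≤ intervalDeviation x N (x j) b + (b - x j) := sub_le_iff_le_add.1 (le_abs_self _)
    _ ≤ discrep x N + ε :=
        add_le_add (intervalDeviation_le_discrep hx.1 hb (min_le_right _ _))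
          (by linarith [min_le_left (x j + ε) 1])

theorem indicator_Ico_eq_sub {α R : Type*} [LinearOrder α] [Ring R] {a b : α} (hab : a ≤ b)
    (y : α) :
    Set.indicator (Set.Ico a b) (fun _ ↦ (1 : R)) y =
      (if y < b then 1 else 0) - (if y < a then 1 else 0) := by
  simp only [Set.indicator_apply, Set.mem_Ico]
  grind

theorem discrep_le_of_abs_sub_le {C : ℝ} (hN : 0 < N)
    (h : ∀ y, 0 ≤ y → y ≤ 1 → |∑ j ∈ Icc 1 N, (if x j < y then 1 else 0) - N * y| ≤ C) :
    discrep x N ≤ 2 * C / N := by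
  have hN' : (0 : ℝ) < N := by exact_mod_cast hN
  refine discrep_le fun a b ha hab hb ↦ ?_
  set E : ℝ → ℝ := fun y ↦ ∑ j ∈ Icc 1 N, (if x j < y then 1 else 0) - N * y with hE
  have hdev : intervalDeviation x N a b = |E b - E a| / N := by
    rw [intervalDeviation, ← abs_of_pos hN', ← abs_div, abs_of_pos hN']
    simp only [hE, indicator_Ico_eq_sub hab.le, sum_sub_distrib]
    congr 1
    field_simp
    ring
  rw [hdev]
  gcongr
  linarith [abs_sub (E b) (E a), h a ha (hab.le.trans hb), h b (ha.trans hab.le) hb]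

end Discrepancy

section Indices

theorem sum_range_mul_eq_sum_sum {M : Type*} [AddCommMonoid M] (b N : ℕ) (g : ℕ → M) :
    ∑ m ∈ range (b * N), g m = ∑ d ∈ range b, ∑ m ∈ range N, g (b * m + d) := by
  induction N with
  | zero => simp
  | succ N ih => simp only [Nat.mul_succ, sum_range_add, ih, sum_range_succ, sum_add_distrib]

theorem sum_range_count_nth {M : Type*} [AddCommMonoid M] (p : ℕ → Prop) [DecidablePred p]
    (N : ℕ) (f : ℕ → M) :
    ∑ j ∈ range (Nat.count p N), f (Nat.nth p j) = ∑ m ∈ range N with p m, f m := by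
  rw [sum_filter]
  induction N with
  | zero => simp
  | succ N ih =>
    rw [sum_range_succ, ← ih, Nat.count_succ]
    split_ifs with h
    · rw [sum_range_succ, Nat.nth_count h]
    · simp

variable {L S : ℕ}

theorem lsDigit_mul_add_zero {b d : ℕ} (hd : d < b) (m : ℕ) : lsDigit b (b * m + d) 0 = d := by
  simp [lsDigit, Nat.mod_eq_of_lt hd]

theorem lsDigit_mul_add_succ {b d : ℕ} (hd : d < b) (m k : ℕ) :
    lsDigit b (b * m + d) (k + 1) = lsDigit b m k := by
  simp only [lsDigit, pow_succ', ← Nat.div_div_eq_div_mul]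
  rw [Nat.mul_add_div (by lia), Nat.div_eq_of_lt hd, add_zero]

theorem lsDigit_eq_zero {b m k : ℕ} (h : m < b ^ k) : lsDigit b m k = 0 := by
  simp [lsDigit, Nat.div_eq_of_lt h]

theorem memNLS_zero : memNLS L S 0 := by
  simp [memNLS, lsDigit]

theorem memNLS_mul_add {d : ℕ} (hd : d < L + S) (m : ℕ) :
    memNLS L S ((L + S) * m + d) ↔ (L ≤ d → L + S ∣ m) ∧ memNLS L S m := by
  have hlt : m % (L + S) < L + S := Nat.mod_lt _ (by lia)
  have h0 : lsDigit (L + S) m 0 = m % (L + S) := by simp [lsDigit]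
  unfold memNLS
  rw [← Nat.and_forall_add_one]
  simp only [zero_add, lsDigit_mul_add_zero hd, lsDigit_mul_add_succ hd, h0,
    Nat.dvd_iff_mod_eq_zero]
  exact and_congr_left' (by lia)

theorem memNLS_mul_add_of_lt {d : ℕ} (hd : d < L) (m : ℕ) :
    memNLS L S ((L + S) * m + d) ↔ memNLS L S m := by
  simp [memNLS_mul_add (show d < L + S by lia), hd.not_ge]

theorem memNLS_mul (hL : 0 < L) (m : ℕ) : memNLS L S ((L + S) * m) ↔ memNLS L S m :=
  memNLS_mul_add_of_lt hL m

theorem memNLS_mul_add_add {i : ℕ} (hi : i < S) (m : ℕ) :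
    memNLS L S ((L + S) * m + (L + i)) ↔ L + S ∣ m ∧ memNLS L S m := by
  simp [memNLS_mul_add (show L + i < L + S by lia)]

theorem memNLS_induction (hL : 0 < L) (hb : 1 < L + S) {P : ℕ → Prop} (zero : P 0)
    (short : ∀ d < L, ∀ m, P m → P ((L + S) * m + d))
    (long : ∀ i < S, ∀ m, P m → P ((L + S) * ((L + S) * m) + (L + i)))
    {m : ℕ} (hm : memNLS L S m) : P m := by
  induction m using Nat.strong_induction_on with
  | _ m ih =>
    rcases m.eq_zero_or_pos with rfl | hpos
    · exact zero
    have hlt : m / (L + S) < m := Nat.div_lt_self hpos hb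
    have hmod : m % (L + S) < L + S := Nat.mod_lt _ (by lia)
    rw [← Nat.div_add_mod m (L + S)] at hm ⊢
    rcases lt_or_ge (m % (L + S)) L with hd | hd
    · exact short _ hd _ (ih _ hlt ((memNLS_mul_add_of_lt hd _).1 hm))
    · obtain ⟨i, hi⟩ := Nat.exists_eq_add_of_le hd
      rw [hi] at hm ⊢
      obtain ⟨⟨m', hm'⟩, hmem⟩ := (memNLS_mul_add_add (by lia) _).1 hm
      rw [hm', memNLS_mul hL] at hmem
      rw [hm']
      exact long i (by lia) m' (ih m' (by nlinarith) hmem)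

open Classical in
/-- The elements of `N_{L,S}` with at most `n` digits in base `L + S`; they index the intervals of
the `n`-th `(L,S)`-partition. -/
def lsIndices (L S n : ℕ) : Finset ℕ :=
  {m ∈ range ((L + S) ^ n) | memNLS L S m}

theorem mem_lsIndices {n m : ℕ} : m ∈ lsIndices L S n ↔ m < (L + S) ^ n ∧ memNLS L S m := by
  simp [lsIndices]

theorem lsIndices_zero : lsIndices L S 0 = {0} := by
  ext m
  simp only [mem_lsIndices, pow_zero, Nat.lt_one_iff, mem_singleton, and_iff_left_iff_imp]
  rintro rfl
  exact memNLS_zero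

theorem filter_dvd_lsIndices_succ (hL : 0 < L) (n : ℕ) :
    {m ∈ lsIndices L S (n + 1) | L + S ∣ m} = (lsIndices L S n).image ((L + S) * ·) := by
  have hb : 0 < L + S := by lia
  ext m
  simp only [mem_filter, mem_image, mem_lsIndices, pow_succ']
  constructor
  · rintro ⟨⟨hlt, hmem⟩, m, rfl⟩
    exact ⟨m, ⟨lt_of_mul_lt_mul_left' hlt, (memNLS_mul hL m).1 hmem⟩, rfl⟩
  · rintro ⟨m, ⟨hlt, hmem⟩, rfl⟩
    exact ⟨⟨Nat.mul_lt_mul_of_pos_left hlt hb, (memNLS_mul hL m).2 hmem⟩, dvd_mul_right _ _⟩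

variable {M : Type*} [AddCommMonoid M]

theorem sum_lsIndices_succ (n : ℕ) (f : ℕ → M) :
    ∑ m ∈ lsIndices L S (n + 1), f m =
      ∑ d ∈ range L, ∑ m ∈ lsIndices L S n, f ((L + S) * m + d) +
      ∑ i ∈ range S, ∑ m ∈ lsIndices L S n with L + S ∣ m, f ((L + S) * m + (L + i)) := by
  classical
  simp only [lsIndices, filter_filter, sum_filter]
  rw [pow_succ', sum_range_mul_eq_sum_sum, sum_range_add]
  congr 1
  · refine sum_congr rfl fun d hd ↦ sum_congr rfl fun m _ ↦ ?_
    exact if_congr (memNLS_mul_add_of_lt (mem_range.1 hd) m) rfl rfl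
  · refine sum_congr rfl fun i hi ↦ sum_congr rfl fun m _ ↦ ?_
    exact if_congr ((memNLS_mul_add_add (mem_range.1 hi) m).trans and_comm) rfl rfl

theorem sum_lsIndices_one (f : ℕ → M) :
    ∑ m ∈ lsIndices L S 1, f m = ∑ d ∈ range (L + S), f d := by
  rw [← zero_add 1, sum_lsIndices_succ, lsIndices_zero, sum_range_add]
  simp [filter_singleton]

theorem sum_lsIndices_add_two (hL : 0 < L) (n : ℕ) (f : ℕ → M) :
    ∑ m ∈ lsIndices L S (n + 2), f m =
      ∑ d ∈ range L, ∑ m ∈ lsIndices L S (n + 1), f ((L + S) * m + d) +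
      ∑ i ∈ range S, ∑ m ∈ lsIndices L S n, f ((L + S) * ((L + S) * m) + (L + i)) := by
  have hb : 0 < L + S := by lia
  rw [sum_lsIndices_succ, filter_dvd_lsIndices_succ hL]
  simp only [sum_image (mul_right_injective₀ hb.ne').injOn]

theorem card_lsIndices_one : #(lsIndices L S 1) = L + S := by
  rw [card_eq_sum_ones, sum_lsIndices_one, sum_const, card_range, smul_eq_mul, mul_one]

theorem card_lsIndices_add_two (hL : 0 < L) (n : ℕ) :
    #(lsIndices L S (n + 2)) = L * #(lsIndices L S (n + 1)) + S * #(lsIndices L S n) := by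
  rw [card_eq_sum_ones, sum_lsIndices_add_two hL]
  simp

theorem eq_card_lsIndices (hL : 0 < L) {t : ℕ → ℕ} (ht0 : t 0 = 1) (ht1 : t 1 = L + S)
    (htrec : ∀ n, t (n + 2) = L * t (n + 1) + S * t n) (n : ℕ) : t n = #(lsIndices L S n) := by
  induction n using Nat.twoStepInduction with
  | zero => simp [ht0, lsIndices_zero]
  | one => rw [ht1, card_lsIndices_one]
  | more n ih ih' => rw [htrec, card_lsIndices_add_two hL, ih, ih']

theorem card_lsIndices_pos (hb : 0 < L + S) (n : ℕ) : 0 < #(lsIndices L S n) :=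
  card_pos.2 ⟨0, mem_lsIndices.2 ⟨pow_pos hb n, memNLS_zero⟩⟩

end Indices

section Points

variable {L S : ℕ} {γ : ℝ}

theorem lsTilde_zero (hL : 0 < L) : lsTilde L γ 0 = 0 := by
  simp [lsTilde, hL]

theorem lsTilde_of_lt {a : ℕ} (ha : a < L) : lsTilde L γ a = a :=
  if_pos ha

theorem lsTilde_add (i : ℕ) : lsTilde L γ (L + i) = L + γ * i := by
  simp [lsTilde]

theorem lsTilde_nonneg (hγ : 0 ≤ γ) (a : ℕ) : 0 ≤ lsTilde L γ a := by
  rcases lt_or_ge a L with ha | ha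
  · exact (lsTilde_of_lt ha).symm ▸ a.cast_nonneg
  · obtain ⟨i, rfl⟩ := Nat.exists_eq_add_of_le ha
    rw [lsTilde_add]
    positivity

theorem lsPhi_eq_sum_range (hL : 0 < L) (hb : 1 < L + S) {m K : ℕ} (h : m < (L + S) ^ K) :
    lsPhi L S γ m = ∑ k ∈ range K, lsTilde L γ (lsDigit (L + S) m k) * γ ^ (k + 1) := by
  have extend : ∀ {K K' : ℕ}, m < (L + S) ^ K → K ≤ K' →
      ∑ k ∈ range K, lsTilde L γ (lsDigit (L + S) m k) * γ ^ (k + 1) =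
        ∑ k ∈ range K', lsTilde L γ (lsDigit (L + S) m k) * γ ^ (k + 1) := by
    intro K K' hK hKK'
    refine sum_subset (range_mono hKK') fun k _ hk ↦ ?_
    have hKk : K ≤ k := by simpa using hk
    rw [lsDigit_eq_zero (hK.trans_le (Nat.pow_le_pow_right (by lia) hKk)), lsTilde_zero hL,
      zero_mul]
  rw [lsPhi, extend (Nat.lt_pow_succ_log_self hb m) (le_max_left _ K), extend h (le_max_right _ K)]

theorem lsPhi_zero (hL : 0 < L) : lsPhi L S γ 0 = 0 := by
  simp [lsPhi, lsDigit, lsTilde_zero hL]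

theorem lsPhi_mul_add (hL : 0 < L) (hb : 1 < L + S) {d : ℕ} (hd : d < L + S) (m : ℕ) :
    lsPhi L S γ ((L + S) * m + d) = (lsTilde L γ d + lsPhi L S γ m) * γ := by
  have hm : m < (L + S) ^ m := Nat.lt_pow_self hb
  have hm' : (L + S) * m + d < (L + S) ^ (m + 1) := by
    rw [pow_succ']
    nlinarith
  rw [lsPhi_eq_sum_range hL hb hm', lsPhi_eq_sum_range hL hb hm, sum_range_succ',
    lsDigit_mul_add_zero hd, add_comm,
    add_mul (lsTilde L γ d), sum_mul]
  simp only [lsDigit_mul_add_succ hd, pow_succ, pow_zero, one_mul, mul_assoc]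

theorem lsPhi_mul_add_of_lt (hb : 1 < L + S) {d : ℕ} (hd : d < L) (m : ℕ) :
    lsPhi L S γ ((L + S) * m + d) = (d + lsPhi L S γ m) * γ := by
  rw [lsPhi_mul_add (by lia) hb (by lia), lsTilde_of_lt hd]

theorem lsPhi_mul_mul_add (hL : 0 < L) (hb : 1 < L + S) {i : ℕ} (hi : i < S) (m : ℕ) :
    lsPhi L S γ ((L + S) * ((L + S) * m) + (L + i)) = L * γ + (i + lsPhi L S γ m) * γ ^ 2 := by
  have hmul := lsPhi_mul_add_of_lt (γ := γ) hb hL m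
  rw [add_zero] at hmul
  rw [lsPhi_mul_add hL hb (by lia), lsTilde_add, hmul]
  push_cast
  ring

theorem lsPhi_nonneg (hγ : 0 ≤ γ) (m : ℕ) : 0 ≤ lsPhi L S γ m :=
  sum_nonneg fun _ _ ↦ mul_nonneg (lsTilde_nonneg hγ _) (by positivity)

theorem lsPhi_lt_one (hL : 0 < L) (hb : 1 < L + S) (hγ : 0 < γ)
    (hroot : L * γ + S * γ ^ 2 = 1) {m : ℕ} (hm : memNLS L S m) : lsPhi L S γ m < 1 := by
  refine memNLS_induction (P := fun m ↦ lsPhi L S γ m < 1) hL hb ?zero ?short ?long hm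
  case zero => simp [lsPhi_zero hL]
  case short =>
    intro d hd m ih
    have hdL : (d : ℝ) + 1 ≤ L := by exact_mod_cast hd
    calc lsPhi L S γ ((L + S) * m + d) = (d + lsPhi L S γ m) * γ := lsPhi_mul_add_of_lt hb hd m
      _ < L * γ := by gcongr; linarith
      _ ≤ 1 := by rw [← hroot]; exact le_add_of_nonneg_right (by positivity)
  case long =>
    intro i hi m ih
    have hiS : (i : ℝ) + 1 ≤ S := by exact_mod_cast hi
    rw [lsPhi_mul_mul_add hL hb hi, ← hroot]
    gcongr
    linarith

theorem lsSeq_one (hL : 0 < L) : lsSeq L S γ 1 = 0 := by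
  rw [lsSeq, Nat.sub_self, Nat.nth_zero_of_zero memNLS_zero, lsPhi_zero hL]

theorem sum_lsSeq {M : Type*} [AddCommMonoid M] (n : ℕ) (f : ℝ → M) :
    ∑ j ∈ Icc 1 #(lsIndices L S n), f (lsSeq L S γ j) =
      ∑ m ∈ lsIndices L S n, f (lsPhi L S γ m) := by
  classical
  have hcount : #(lsIndices L S n) = Nat.count (memNLS L S) ((L + S) ^ n) := by
    simp only [lsIndices, Nat.count_eq_card_filter_range]
  rw [hcount, ← Ico_add_one_right_eq_Icc, sum_Ico_eq_sum_range, Nat.add_sub_cancel]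
  simp only [lsSeq, Nat.add_sub_cancel_left, lsIndices]
  exact sum_range_count_nth (memNLS L S) _ fun m ↦ f (lsPhi L S γ m)

end Points

section UniformDistribution

theorem max_zero_min_add {G : Type*} [AddCommGroup G] [LinearOrder G] [IsOrderedAddMonoid G]
    {a b : G} (ha : 0 ≤ a) (hb : 0 ≤ b) (x : G) :
    max 0 (min x a) + max 0 (min (x - a) b) = max 0 (min x (a + b)) := by
  grind

/-- The distribution function `x ↦ λ([0,1) ∩ (-∞, x))` of the uniform measure on `[0,1)`. Using it
in place of `x` makes local discrepancies vanish outside `[0,1]`. -/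
def uniformCDF (x : ℝ) : ℝ :=
  max 0 (min x 1)

theorem uniformCDF_of_nonpos {x : ℝ} (hx : x ≤ 0) : uniformCDF x = 0 :=
  max_eq_left (min_le_of_left_le hx)

theorem uniformCDF_of_one_le {x : ℝ} (hx : 1 ≤ x) : uniformCDF x = 1 := by
  simp [uniformCDF, hx]

theorem uniformCDF_of_mem_Icc {x : ℝ} (hx0 : 0 ≤ x) (hx1 : x ≤ 1) : uniformCDF x = x := by
  simp [uniformCDF, hx0, hx1]

theorem uniformCDF_nonneg (x : ℝ) : 0 ≤ uniformCDF x :=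
  le_max_left _ _

theorem uniformCDF_le_one (x : ℝ) : uniformCDF x ≤ 1 :=
  max_le zero_le_one (min_le_right _ _)

theorem sum_range_uniformCDF_sub (K : ℕ) (z : ℝ) :
    ∑ d ∈ range K, uniformCDF (z - d) = max 0 (min z K) := by
  induction K with
  | zero => simp
  | succ K ih =>
    rw [sum_range_succ, ih, uniformCDF, max_zero_min_add K.cast_nonneg zero_le_one, Nat.cast_succ]

theorem abs_sum_range_uniformCDF_sub_le (K : ℕ) (z : ℝ) :
    |∑ d ∈ range K, uniformCDF (z - d)| ≤ K := by
  rw [abs_of_nonneg (sum_nonneg fun _ _ ↦ uniformCDF_nonneg _)]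
  simpa using sum_le_card_nsmul (range K) _ 1 fun d _ ↦ uniformCDF_le_one (z - d)

theorem uniformCDF_eq_sum_add_sum {L S : ℕ} {γ : ℝ} (hγ : 0 < γ)
    (hroot : L * γ + S * γ ^ 2 = 1) (x : ℝ) :
    uniformCDF x = γ * ∑ d ∈ range L, uniformCDF (x / γ - d) +
      γ ^ 2 * ∑ i ∈ range S, uniformCDF ((x - L * γ) / γ ^ 2 - i) := by
  have hγ2 : 0 < γ ^ 2 := by positivity
  rw [sum_range_uniformCDF_sub, sum_range_uniformCDF_sub, mul_max_of_nonneg _ _ hγ.le,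
    mul_min_of_nonneg _ _ hγ.le, mul_max_of_nonneg _ _ hγ2.le, mul_min_of_nonneg _ _ hγ2.le,
    mul_div_cancel₀ _ hγ.ne', mul_div_cancel₀ _ hγ2.ne', mul_zero, mul_zero, mul_comm γ,
    mul_comm (γ ^ 2), max_zero_min_add (by positivity) (by positivity), hroot, uniformCDF]

-- The shifts of `(0, 1)` by integers are disjoint, so at most one summand is nonzero.
theorem abs_sum_range_sub_le {F : ℝ → ℝ} {B : ℝ} (h0 : ∀ y ≤ 0, F y = 0)
    (h1 : ∀ y, 1 ≤ y → F y = 0) (hB : ∀ y, |F y| ≤ B) (K : ℕ) (z : ℝ) :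
    |∑ d ∈ range K, F (z - d)| ≤ B := by
  have hzero : ∀ d : ℕ, d ≠ ⌊z⌋₊ → F (z - d) = 0 := by
    intro d hd
    rcases hd.lt_or_gt with hlt | hgt
    · have : ((d + 1 : ℕ) : ℝ) ≤ z := (Nat.le_floor_iff' d.succ_ne_zero).1 hlt
      exact h1 _ (by push_cast at this; linarith)
    · exact h0 _ (sub_nonpos.2 ((Nat.floor_lt' (by lia)).1 hgt).le)
  by_cases hmem : ⌊z⌋₊ ∈ range K
  · rw [sum_eq_single_of_mem _ hmem fun d _ hd ↦ hzero d hd]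
    exact hB _
  · rw [sum_eq_zero fun d hd ↦ hzero d (ne_of_mem_of_not_mem hd hmem), abs_zero]
    exact (abs_nonneg _).trans (hB 0)

end UniformDistribution

section Recurrence

theorem sub_mul_succ_eq_of_root {R : Type*} [CommRing R] {a b r : R}
    (hroot : a * r + b * r ^ 2 = 1) {u : ℕ → R}
    (hu : ∀ n, u (n + 2) = a * u (n + 1) + b * u n) (n : ℕ) :
    u n - r * u (n + 1) = (-(b * r)) ^ n * (u 0 - r * u 1) := by
  induction n with
  | zero => simp
  | succ n ih =>
    rw [pow_succ, hu]
    linear_combination (-(b * r)) * ih - u (n + 1) * hroot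

theorem le_add_div_one_sub_of_two_step {α : Type*} {F : ℕ → α → ℝ} {A c q : ℝ} (hc : 0 ≤ c)
    (hq0 : 0 ≤ q) (hq1 : q < 1) (h0 : ∀ x, F 0 x ≤ A) (h1 : ∀ x, F 1 x ≤ A)
    (hstep : ∀ n B, (∀ x, F n x ≤ B) → (∀ x, F (n + 1) x ≤ B) → ∀ x, F (n + 2) x ≤ B + c * q ^ n)
    (n : ℕ) (x : α) : F n x ≤ A + c / (1 - q) := by
  have hpartial : ∀ n, (∀ x, F n x ≤ A + c * ∑ k ∈ range n, q ^ k) ∧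
      ∀ x, F (n + 1) x ≤ A + c * ∑ k ∈ range n, q ^ k := by
    intro n
    induction n with
    | zero => simpa using ⟨h0, h1⟩
    | succ n ih =>
      rw [sum_range_succ, mul_add, ← add_assoc]
      exact ⟨fun x ↦ (ih.2 x).trans (le_add_of_nonneg_right (by positivity)),
        hstep n _ ih.1 ih.2⟩
  refine ((hpartial n).1 x).trans ?_
  rw [div_eq_mul_inv, ← tsum_geometric_of_lt_one hq0 hq1]
  gcongr
  exact (summable_geometric_of_lt_one hq0 hq1).sum_le_tsum _ fun k _ ↦ by positivity

variable {L S : ℕ} {γ : ℝ}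

theorem mul_root_lt_one (hSL : S ≤ L) (hγ : 0 < γ) (hroot : L * γ + S * γ ^ 2 = 1) :
    S * γ < 1 := by
  have hSL' : (S : ℝ) * γ ≤ L * γ := by gcongr
  by_contra! h
  have : 0 < S * γ ^ 2 := by
    rw [pow_two, ← mul_assoc]
    positivity
  linarith

theorem abs_card_lsIndices_sub_le (hL : 0 < L) (hγ0 : 0 < γ) (hγ1 : γ < 1)
    (hroot : L * γ + S * γ ^ 2 = 1) (hq : S * γ < 1) (n : ℕ) :
    |(#(lsIndices L S n) : ℝ) - γ * #(lsIndices L S (n + 1))| ≤ (S * γ) ^ n := by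
  have hq0 : 0 ≤ S * γ := by positivity
  have hinit : 1 - γ * (L + S) = -(S * γ * (1 - γ)) := by linear_combination -hroot
  rw [sub_mul_succ_eq_of_root hroot (u := fun n ↦ (#(lsIndices L S n) : ℝ)) fun n ↦ by
    rw [card_lsIndices_add_two hL]; push_cast; rfl]
  simp only [lsIndices_zero, card_lsIndices_one, card_singleton, Nat.cast_one, Nat.cast_add]
  rw [hinit, abs_mul, abs_pow, abs_neg, abs_neg, abs_of_nonneg hq0,
    abs_of_nonneg (mul_nonneg hq0 (by linarith))]
  exact mul_le_of_le_one_right (by positivity) (by nlinarith)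

end Recurrence

section LocalDiscrepancy

variable {L S : ℕ} {γ : ℝ}

/-- The number of points `φ_{L,S}(m)`, with `m ∈ N_{L,S}` having at most `n` digits, that lie to the
left of `x`. -/
def lsCount (L S : ℕ) (γ : ℝ) (n : ℕ) (x : ℝ) : ℕ :=
  ∑ m ∈ lsIndices L S n, if lsPhi L S γ m < x then 1 else 0

theorem lsCount_le_card (n : ℕ) (x : ℝ) : lsCount L S γ n x ≤ #(lsIndices L S n) := by
  rw [lsCount, ← card_filter]
  exact card_filter_le _ _

theorem lsCount_of_nonpos (hγ : 0 ≤ γ) (n : ℕ) {x : ℝ} (hx : x ≤ 0) : lsCount L S γ n x = 0 :=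
  sum_eq_zero fun m _ ↦ if_neg (hx.trans (lsPhi_nonneg hγ m)).not_gt

theorem lsCount_of_one_le (hL : 0 < L) (hb : 1 < L + S) (hγ : 0 < γ)
    (hroot : L * γ + S * γ ^ 2 = 1) (n : ℕ) {x : ℝ} (hx : 1 ≤ x) :
    lsCount L S γ n x = #(lsIndices L S n) := by
  rw [card_eq_sum_ones]
  exact sum_congr rfl fun m hm ↦
    if_pos ((lsPhi_lt_one hL hb hγ hroot (mem_lsIndices.1 hm).2).trans_le hx)

theorem lsCount_add_two (hL : 0 < L) (hb : 1 < L + S) (hγ : 0 < γ) (n : ℕ) (x : ℝ) :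
    lsCount L S γ (n + 2) x =
      ∑ d ∈ range L, lsCount L S γ (n + 1) (x / γ - d) +
      ∑ i ∈ range S, lsCount L S γ n ((x - L * γ) / γ ^ 2 - i) := by
  simp only [lsCount]
  rw [sum_lsIndices_add_two hL]
  congr 1
  · refine sum_congr rfl fun d hd ↦ sum_congr rfl fun m _ ↦ if_congr ?_ rfl rfl
    rw [lsPhi_mul_add_of_lt hb (mem_range.1 hd), lt_sub_iff_add_lt', lt_div_iff₀ hγ]
  · refine sum_congr rfl fun i hi ↦ sum_congr rfl fun m _ ↦ if_congr ?_ rfl rfl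
    rw [lsPhi_mul_mul_add hL hb (mem_range.1 hi), lt_sub_iff_add_lt', lt_div_iff₀ (by positivity),
      lt_sub_iff_add_lt']

/-- The local discrepancy at `x` of the points of level `n`, not normalized by their number. -/
def lsLocalDiscrep (L S : ℕ) (γ : ℝ) (n : ℕ) (x : ℝ) : ℝ :=
  lsCount L S γ n x - #(lsIndices L S n) * uniformCDF x

theorem lsLocalDiscrep_of_nonpos (hγ : 0 ≤ γ) (n : ℕ) {x : ℝ} (hx : x ≤ 0) :
    lsLocalDiscrep L S γ n x = 0 := by
  simp [lsLocalDiscrep, lsCount_of_nonpos hγ n hx, uniformCDF_of_nonpos hx]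

theorem lsLocalDiscrep_of_one_le (hL : 0 < L) (hb : 1 < L + S) (hγ : 0 < γ)
    (hroot : L * γ + S * γ ^ 2 = 1) (n : ℕ) {x : ℝ} (hx : 1 ≤ x) :
    lsLocalDiscrep L S γ n x = 0 := by
  simp [lsLocalDiscrep, lsCount_of_one_le hL hb hγ hroot n hx, uniformCDF_of_one_le hx]

theorem abs_lsLocalDiscrep_le_card (n : ℕ) (x : ℝ) :
    |lsLocalDiscrep L S γ n x| ≤ #(lsIndices L S n) := by
  have hcount : (lsCount L S γ n x : ℝ) ≤ #(lsIndices L S n) := by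
    exact_mod_cast lsCount_le_card n x
  have hle : #(lsIndices L S n) * uniformCDF x ≤ #(lsIndices L S n) :=
    mul_le_of_le_one_right (Nat.cast_nonneg _) (uniformCDF_le_one x)
  exact abs_sub_le_of_nonneg_of_le (Nat.cast_nonneg _) hcount
    (mul_nonneg (Nat.cast_nonneg _) (uniformCDF_nonneg x)) hle

theorem lsLocalDiscrep_add_two (hL : 0 < L) (hb : 1 < L + S) (hγ : 0 < γ)
    (hroot : L * γ + S * γ ^ 2 = 1) (n : ℕ) (x : ℝ) :
    lsLocalDiscrep L S γ (n + 2) x =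
      (∑ d ∈ range L, lsLocalDiscrep L S γ (n + 1) (x / γ - d) +
        ∑ i ∈ range S, lsLocalDiscrep L S γ n ((x - L * γ) / γ ^ 2 - i)) +
      (#(lsIndices L S (n + 1)) - γ * #(lsIndices L S (n + 2))) *
        ∑ d ∈ range L, uniformCDF (x / γ - d) +
      (#(lsIndices L S n) - γ ^ 2 * #(lsIndices L S (n + 2))) *
        ∑ i ∈ range S, uniformCDF ((x - L * γ) / γ ^ 2 - i) := by
  simp only [lsLocalDiscrep, sum_sub_distrib, ← mul_sum]
  rw [lsCount_add_two hL hb hγ, uniformCDF_eq_sum_add_sum hγ hroot x]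
  push_cast
  ring

theorem abs_sum_lsLocalDiscrep_add_sum_le (hL : 0 < L) (hb : 1 < L + S) (hγ : 0 < γ)
    (hroot : L * γ + S * γ ^ 2 = 1) {n : ℕ} {B : ℝ} (hn : ∀ y, |lsLocalDiscrep L S γ n y| ≤ B)
    (hn' : ∀ y, |lsLocalDiscrep L S γ (n + 1) y| ≤ B) (x : ℝ) :
    |∑ d ∈ range L, lsLocalDiscrep L S γ (n + 1) (x / γ - d) +
      ∑ i ∈ range S, lsLocalDiscrep L S γ n ((x - L * γ) / γ ^ 2 - i)| ≤ B := by
  have hnonpos : ∀ k, ∀ y ≤ 0, lsLocalDiscrep L S γ k y = 0 := fun k _ ↦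
    lsLocalDiscrep_of_nonpos hγ.le k
  have hone : ∀ k y, 1 ≤ y → lsLocalDiscrep L S γ k y = 0 := fun k _ ↦
    lsLocalDiscrep_of_one_le hL hb hγ hroot k
  rcases le_total x (L * γ) with hx | hx
  · have hleft : (x - L * γ) / γ ^ 2 ≤ 0 :=
      div_nonpos_of_nonpos_of_nonneg (sub_nonpos.2 hx) (by positivity)
    rw [sum_eq_zero (s := range S) fun i _ ↦ hnonpos n _ (by linarith [i.cast_nonneg (α := ℝ)]),
      add_zero]
    exact abs_sum_range_sub_le (hnonpos _) (hone _) hn' L _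
  · have hright : L ≤ x / γ := (le_div_iff₀ hγ).2 hx
    rw [sum_eq_zero (s := range L) fun d hd ↦ hone (n + 1) _ (le_sub_iff_add_le'.2
      (le_trans (by exact_mod_cast mem_range.1 hd) hright)), zero_add]
    exact abs_sum_range_sub_le (hnonpos _) (hone _) hn S _

theorem abs_lsLocalDiscrep_add_two_le (hL : 0 < L) (hb : 1 < L + S) (hγ0 : 0 < γ) (hγ1 : γ < 1)
    (hroot : L * γ + S * γ ^ 2 = 1) (hq : S * γ < 1) {n : ℕ} {B : ℝ}
    (hn : ∀ y, |lsLocalDiscrep L S γ n y| ≤ B) (hn' : ∀ y, |lsLocalDiscrep L S γ (n + 1) y| ≤ B)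
    (x : ℝ) : |lsLocalDiscrep L S γ (n + 2) x| ≤ B + (L + 2 * S) * (S * γ) ^ n := by
  set q : ℝ := S * γ
  set t : ℕ → ℝ := fun k ↦ #(lsIndices L S k)
  have hδ : |t n - γ * t (n + 1)| ≤ q ^ n := abs_card_lsIndices_sub_le hL hγ0 hγ1 hroot hq n
  have hδ' : |t (n + 1) - γ * t (n + 2)| ≤ q ^ n :=
    (abs_card_lsIndices_sub_le hL hγ0 hγ1 hroot hq (n + 1)).trans
      (pow_le_pow_of_le_one (by positivity) hq.le n.le_succ)
  have hδ₂ : |t n - γ ^ 2 * t (n + 2)| ≤ 2 * q ^ n := calc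
    |t n - γ ^ 2 * t (n + 2)| = |(t n - γ * t (n + 1)) + γ * (t (n + 1) - γ * t (n + 2))| := by
      ring_nf
    _ ≤ |t n - γ * t (n + 1)| + γ * |t (n + 1) - γ * t (n + 2)| := by
      simpa [abs_mul, abs_of_pos hγ0] using
        abs_add_le (t n - γ * t (n + 1)) (γ * (t (n + 1) - γ * t (n + 2)))
    _ ≤ q ^ n + 1 * q ^ n := by gcongr
    _ = 2 * q ^ n := by ring
  rw [lsLocalDiscrep_add_two hL hb hγ0 hroot]
  refine (abs_add_three _ _ _).trans ?_
  rw [abs_mul, abs_mul]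
  calc _ ≤ B + q ^ n * L + 2 * q ^ n * S := by
        gcongr
        · exact abs_sum_lsLocalDiscrep_add_sum_le hL hb hγ0 hroot hn hn' x
        · exact abs_sum_range_uniformCDF_sub_le L _
        · exact abs_sum_range_uniformCDF_sub_le S _
    _ = B + (L + 2 * S) * q ^ n := by ring

theorem abs_lsLocalDiscrep_le (hL : 0 < L) (hb : 1 < L + S) (hγ0 : 0 < γ) (hγ1 : γ < 1)
    (hroot : L * γ + S * γ ^ 2 = 1) (hq : S * γ < 1) (n : ℕ) (x : ℝ) :
    |lsLocalDiscrep L S γ n x| ≤ (L + S) + (L + 2 * S) / (1 - S * γ) := by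
  refine le_add_div_one_sub_of_two_step (F := fun n x ↦ |lsLocalDiscrep L S γ n x|) (by positivity)
    (by positivity) hq (fun x ↦ ?_) (fun x ↦ ?_)
    (fun n B ↦ abs_lsLocalDiscrep_add_two_le hL hb hγ0 hγ1 hroot hq) n x
  · refine (abs_lsLocalDiscrep_le_card 0 x).trans ?_
    rw [lsIndices_zero, card_singleton]
    exact_mod_cast hb.le
  · refine (abs_lsLocalDiscrep_le_card 1 x).trans ?_
    rw [card_lsIndices_one, Nat.cast_add]

theorem discrep_lsSeq_le (hL : 0 < L) (hb : 1 < L + S) (hγ0 : 0 < γ) (hγ1 : γ < 1)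
    (hroot : L * γ + S * γ ^ 2 = 1) (hq : S * γ < 1) (n : ℕ) :
    discrep (lsSeq L S γ) #(lsIndices L S n) ≤
      2 * ((L + S) + (L + 2 * S) / (1 - S * γ)) / #(lsIndices L S n) := by
  refine discrep_le_of_abs_sub_le (card_lsIndices_pos (by lia) n) fun y hy0 hy1 ↦ ?_
  have hbound := abs_lsLocalDiscrep_le hL hb hγ0 hγ1 hroot hq n y
  rw [lsLocalDiscrep, uniformCDF_of_mem_Icc hy0 hy1, lsCount] at hbound
  rw [sum_lsSeq n fun z ↦ if z < y then (1 : ℝ) else 0]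
  exact_mod_cast hbound

theorem inv_card_le_discrep_lsSeq (hL : 0 < L) (n : ℕ) :
    (#(lsIndices L S n) : ℝ)⁻¹ ≤ discrep (lsSeq L S γ) #(lsIndices L S n) :=
  inv_le_discrep (mem_Icc.2 ⟨le_rfl, card_lsIndices_pos (by lia) n⟩) (by simp [lsSeq_one hL])

end LocalDiscrepancy

/-- If `S ≤ L`, the first `t_n` points of the `(L,S)`-sequence
have normalized discrepancy bounded above and below by positive constants:
`c₁′ ≤ t_n · D(ξ¹,…,ξ^{t_n}) ≤ c₁` for all `n ≥ 1`. -/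
theorem ls_partition_discrepancy_SleL (L S : ℕ) (hL : 0 < L) (hS : 0 < S) (hSL : S ≤ L)
    (γ : ℝ) (hγ0 : 0 < γ) (hγ1 : γ < 1)
    (hroot : (L : ℝ) * γ + (S : ℝ) * γ ^ 2 = 1)
    (t : ℕ → ℕ) (ht0 : t 0 = 1) (ht1 : t 1 = L + S)
    (htrec : ∀ n, 2 ≤ n → t n = L * t (n - 1) + S * t (n - 2)) :
    ∃ c₁ c₁' : ℝ, 0 < c₁ ∧ 0 < c₁' ∧ ∀ n : ℕ, 1 ≤ n →
      c₁' ≤ (t n : ℝ) * discrep (lsSeq L S γ) (t n) ∧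
      (t n : ℝ) * discrep (lsSeq L S γ) (t n) ≤ c₁ := by
  have hb : 1 < L + S := by lia
  have hq : S * γ < 1 := mul_root_lt_one hSL hγ0 hroot
  have : 0 < 1 - S * γ := sub_pos.2 hq
  refine ⟨2 * ((L + S) + (L + 2 * S) / (1 - S * γ)), 1, by positivity, one_pos, fun n _ ↦ ?_⟩
  have ht : t n = #(lsIndices L S n) :=
    eq_card_lsIndices hL ht0 ht1 (fun n ↦ htrec (n + 2) (by lia)) n
  have htpos : (0 : ℝ) < t n := by exact_mod_cast ht ▸ card_lsIndices_pos (by lia) n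
  rw [← inv_le_iff_one_le_mul₀' htpos, ← le_div_iff₀' htpos, ht]
  exact ⟨inv_card_le_discrep_lsSeq hL n, discrep_lsSeq_le hL hb hγ0 hγ1 hroot hq n⟩
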